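/- Interpolation for circumscription fails if the interpolant is required to lie in 𝓛(T) ∩ 𝓛(φ) rather than 𝓛(T) ∩ 𝓛(L(φ) ∪ P): let p and q be two distinct propositional variables and T = {¬p → q}. Then Circ[T;{p};{q}] ⊨ q, yet there is no set γ of formulas with γ ⊆ 𝓛({q}), T ⊨ γ and Circ[γ;{p};{q}] ⊨ q (indeed every formula in 𝓛({q}) entailed by T is a tautology, and Circ[γ;{p};{q}] ⊭ q for any set γ of tautologies). -/

import Mathlib

namespace NMR

/-- Propositional formulas over a variable type `V`. -/
inductive PropForm (V : Type*) : Type _ where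
  | var : V → PropForm V
  | tru : PropForm V
  | fls : PropForm V
  | neg : PropForm V → PropForm V
  | conj : PropForm V → PropForm V → PropForm V
  | disj : PropForm V → PropForm V → PropForm V
  | impl : PropForm V → PropForm V → PropForm V

variable {V : Type*}

/-- Truth value of a formula under a valuation. -/
def PropForm.eval (ν : V → Bool) : PropForm V → Bool
  | .var v => ν v
  | .tru => true
  | .fls => false
  | .neg φ => !(φ.eval ν)
  | .conj φ ψ => φ.eval ν && ψ.eval ν
  | .disj φ ψ => φ.eval ν || ψ.eval ν
  | .impl φ ψ => !(φ.eval ν) || ψ.eval ν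

/-- The set of variables occurring in a formula. -/
def PropForm.vars : PropForm V → Set V
  | .var v => {v}
  | .tru => ∅
  | .fls => ∅
  | .neg φ => φ.vars
  | .conj φ ψ => φ.vars ∪ ψ.vars
  | .disj φ ψ => φ.vars ∪ ψ.vars
  | .impl φ ψ => φ.vars ∪ ψ.vars

/-- `ν ⊨ φ`. -/
def Sat (ν : V → Bool) (φ : PropForm V) : Prop := φ.eval ν = true

/-- `ν ⊨ T` for a set of formulas. -/
def SatSet (ν : V → Bool) (T : Set (PropForm V)) : Prop := ∀ φ ∈ T, Sat ν φ

/-- `T ⊨ φ`. -/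
def Entails (T : Set (PropForm V)) (φ : PropForm V) : Prop :=
  ∀ ν : V → Bool, SatSet ν T → Sat ν φ

/-- `T ⊨ Γ` for a set `Γ`. -/
def EntailsSet (T Γ : Set (PropForm V)) : Prop := ∀ φ ∈ Γ, Entails T φ

/-- A tautology is satisfied by every valuation. -/
def Tautology (φ : PropForm V) : Prop := ∀ ν : V → Bool, Sat ν φ

/-- `L(T)`: the set of variables occurring in a set of formulas. -/
def varsOf (T : Set (PropForm V)) : Set V := ⋃ φ ∈ T, φ.vars

/-- `𝓛(S)`: the set of formulas all of whose variables lie in `S`. -/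
def FormsOver (S : Set V) : Set (PropForm V) := {φ | φ.vars ⊆ S}

/-- `Cn^S(T)`: the formulas in `𝓛(S)` entailed by `T`. -/
def Cn (S : Set V) (T : Set (PropForm V)) : Set (PropForm V) :=
  {φ | φ.vars ⊆ S ∧ Entails T φ}

/-- Two sets of formulas are logically equivalent iff they have the same models. -/
def EquivTheories (T T' : Set (PropForm V)) : Prop :=
  ∀ ν : V → Bool, SatSet ν T ↔ SatSet ν T'

/-- `ν ≤_{P,Q} ν'`. -/
def circLe (P Q : Set V) (ν ν' : V → Bool) : Prop :=
  (∀ x, x ∉ P ∪ Q → ν x = ν' x) ∧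
    {x | x ∈ P ∧ ν x = true} ⊆ {x | x ∈ P ∧ ν' x = true}

/-- `ν <_{P,Q} ν'`. -/
def circLt (P Q : Set V) (ν ν' : V → Bool) : Prop :=
  circLe P Q ν ν' ∧ {x | x ∈ P ∧ ν x = true} ⊂ {x | x ∈ P ∧ ν' x = true}

/-- `ν` is a model of `Circ[T;P;Q]`. -/
def CircModel (T : Set (PropForm V)) (P Q : Set V) (ν : V → Bool) : Prop :=
  SatSet ν T ∧ ¬ ∃ ν' : V → Bool, SatSet ν' T ∧ circLt P Q ν' ν

/-- `Circ[T;P;Q] ⊨ φ`. -/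
def CircEntails (T : Set (PropForm V)) (P Q : Set V) (φ : PropForm V) : Prop :=
  ∀ ν : V → Bool, CircModel T P Q ν → Sat ν φ

/-!
In a model of `¬p → q` where `q` is false, `p` is true; making `p` false and `q` true yields a
strictly smaller model, so `q` holds in every minimal model. On the other hand any
valuation becomes a model of `¬p → q` once `p` is made true, a change which formulas over `{q}`
do not see, so the theory has no consequences over `{q}` besides tautologies. Circumscribing
tautologies makes `p` false and says nothing about `q`.
-/

section

variable {ν μ : V → Bool} {φ ψ : PropForm V} {P Q S : Set V} {T γ : Set (PropForm V)} {p q : V}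

theorem PropForm.eval_congr (h : Set.EqOn ν μ φ.vars) : φ.eval ν = φ.eval μ := by
  induction φ with
  | var v => exact h rfl
  | tru | fls => rfl
  | neg φ ih => exact congrArg not (ih h)
  | conj φ ψ ihφ ihψ | disj φ ψ ihφ ihψ | impl φ ψ ihφ ihψ =>
    rw [PropForm.vars, Set.eqOn_union] at h
    simp only [PropForm.eval, ihφ h.1, ihψ h.2]

theorem sat_congr (h : Set.EqOn ν μ φ.vars) : Sat ν φ ↔ Sat μ φ := by
  rw [Sat, Sat, PropForm.eval_congr h]

theorem sat_neg_impl : Sat ν (.impl (.neg φ) ψ) ↔ Sat ν φ ∨ Sat ν ψ := by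
  simp only [Sat, PropForm.eval, Bool.not_not, Bool.or_eq_true]

theorem satSet_singleton : SatSet ν {φ} ↔ Sat ν φ := by
  simp only [SatSet, Set.mem_singleton_iff, forall_eq]

theorem Entails.tautology_of_eqOn_model (hT : Entails T ψ) (hψ : ψ ∈ FormsOver S)
    (hmodel : ∀ ν : V → Bool, ∃ μ, SatSet μ T ∧ Set.EqOn ν μ S) : Tautology ψ := by
  intro ν
  obtain ⟨μ, hμT, hνμ⟩ := hmodel ν
  exact (sat_congr (hνμ.mono hψ)).2 (hT μ hμT)

theorem circLt_update_false [DecidableEq V] (hp : p ∈ P) (hνp : ν p = true) :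
    circLt P Q (Function.update ν p false) ν := by
  have hsub : {x | x ∈ P ∧ Function.update ν p false x = true} ⊆ {x | x ∈ P ∧ ν x = true} := by
    rintro x ⟨hxP, hx⟩
    have hxp : x ≠ p := by
      rintro rfl
      simp only [Function.update_self, Bool.false_eq_true] at hx
    exact ⟨hxP, by rwa [Function.update_of_ne hxp] at hx⟩
  refine ⟨⟨fun x hx => ?_, hsub⟩, (Set.ssubset_iff_of_subset hsub).2 ⟨p, ⟨hp, hνp⟩, ?_⟩⟩
  · exact Function.update_of_ne (ne_of_mem_of_not_mem (Set.mem_union_left Q hp) hx).symm _ _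
  · rintro ⟨-, h⟩
    simp only [Function.update_self, Bool.false_eq_true] at h

theorem circLt.update_left [DecidableEq V] (h : circLt P Q ν μ) (hqQ : q ∈ Q) (hqP : q ∉ P)
    (b : Bool) : circLt P Q (Function.update ν q b) μ := by
  have htrue : {x | x ∈ P ∧ Function.update ν q b x = true} = {x | x ∈ P ∧ ν x = true} := by
    ext x
    refine and_congr_right fun hx => ?_
    rw [Function.update_of_ne (ne_of_mem_of_not_mem hx hqP)]
  rw [circLt, circLe, htrue]
  refine ⟨⟨fun x hx => ?_, h.1.2⟩, h.2⟩
  rw [Function.update_of_ne (ne_of_mem_of_not_mem (Set.mem_union_right P hqQ) hx).symm,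
    h.1.1 x hx]

theorem not_circLt_of_forall_eq_false (hμ : ∀ x ∈ P, μ x = false) : ¬ circLt P Q ν μ := by
  rintro ⟨-, hlt⟩
  obtain ⟨x, ⟨hxP, hx⟩, -⟩ := Set.exists_of_ssubset hlt
  exact Bool.false_ne_true ((hμ x hxP).symm.trans hx)

theorem circEntails_neg_var_impl_var (hp : p ∈ P) (hqQ : q ∈ Q) (hqP : q ∉ P) :
    CircEntails {.impl (.neg (.var p)) (.var q)} P Q (.var q) := by
  classical
  rintro ν ⟨hν, hmin⟩
  by_contra hνq
  have hνp : ν p = true := (sat_neg_impl.1 (satSet_singleton.1 hν)).resolve_right hνq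
  exact hmin ⟨Function.update (Function.update ν p false) q true,
    satSet_singleton.2 (sat_neg_impl.2 (Or.inr (Function.update_self ..))),
    (circLt_update_false hp hνp).update_left hqQ hqP true⟩

theorem Entails.tautology_of_neg_var_impl (h : Entails {.impl (.neg (.var p)) φ} ψ)
    (hp : p ∉ S) (hψ : ψ ∈ FormsOver S) : Tautology ψ := by
  classical
  refine h.tautology_of_eqOn_model hψ fun ν => ⟨Function.update ν p true, ?_, fun x hx => ?_⟩
  · exact satSet_singleton.2 (sat_neg_impl.2 (Or.inl (Function.update_self ..)))
  · rw [Function.update_of_ne (ne_of_mem_of_not_mem hx hp)]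

theorem circModel_of_forall_tautology (hγ : ∀ ψ ∈ γ, Tautology ψ) (hν : ∀ x ∈ P, ν x = false) :
    CircModel γ P Q ν :=
  ⟨fun ψ hψ => hγ ψ hψ ν, fun ⟨_, _, hlt⟩ => not_circLt_of_forall_eq_false hν hlt⟩

theorem not_circEntails_var_of_forall_tautology (hγ : ∀ ψ ∈ γ, Tautology ψ) :
    ¬ CircEntails γ P Q (.var q) := fun h =>
  Bool.false_ne_true <|
    h (fun _ => false) (circModel_of_forall_tautology hγ fun _ _ => rfl)

end

/-- the counterexample showing the interpolant cannot be required to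
lie in `𝓛(T) ∩ 𝓛(φ)`. -/
theorem circ_interpolation_counterexample {V : Type*} (p q : V) (hpq : p ≠ q) :
    CircEntails {PropForm.impl (PropForm.neg (PropForm.var p)) (PropForm.var q)}
        {p} {q} (PropForm.var q) ∧
    (∀ ψ : PropForm V, ψ.vars ⊆ {q} →
      Entails {PropForm.impl (PropForm.neg (PropForm.var p)) (PropForm.var q)} ψ →
      Tautology ψ) ∧
    (∀ γ : Set (PropForm V), (∀ ψ ∈ γ, Tautology ψ) →
      ¬ CircEntails γ {p} {q} (PropForm.var q)) ∧
    ¬ ∃ γ : Set (PropForm V),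
        γ ⊆ FormsOver {q} ∧
        EntailsSet {PropForm.impl (PropForm.neg (PropForm.var p)) (PropForm.var q)} γ ∧
        CircEntails γ {p} {q} (PropForm.var q) := by
  have taut_of_entails : ∀ ψ : PropForm V, ψ.vars ⊆ {q} →
      Entails {.impl (.neg (.var p)) (.var q)} ψ → Tautology ψ :=
    fun _ hψ hT => hT.tautology_of_neg_var_impl hpq hψ
  refine ⟨circEntails_neg_var_impl_var rfl rfl hpq.symm, taut_of_entails,
    fun _ => not_circEntails_var_of_forall_tautology, ?_⟩
  rintro ⟨γ, hγq, hTγ, hγ⟩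
  have hγ_taut : ∀ ψ ∈ γ, Tautology ψ := fun ψ hψ => taut_of_entails ψ (hγq hψ) (hTγ ψ hψ)
  exact not_circEntails_var_of_forall_tautology hγ_taut hγ

end NMR
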